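/- (Proposition 1, joint amplitude block.) Fix M, K ∈ ℕ, observations a : Fin K → ℝ with a k > 0 for all k, and feature vectors W : Fin K → (Fin M → ℝ). For v, w : Fin M → ℝ write ⟨v,w⟩ = ∑ m, v m · w m. Define L : (Fin M → ℝ) × (Fin M → ℝ) → ℝ by L(α, β) = ∑ k, Real.log (ProbabilityTheory.gammaPDFReal (Real.exp ⟨α, W k⟩) (Real.exp (−⟨β, W k⟩)) (a k)). Then L is differentiable at every (α, β), and its Fréchet derivative at (α, β) maps a direction (h, h') : (Fin M → ℝ) × (Fin M → ℝ) to ∑ m, g_α(m) · h m + ∑ m, g_β(m) · h' m, where g_α(m) = ∑ k, (W k) m · Real.exp ⟨α, W k⟩ · (Real.log (a k) − ψ(Real.exp ⟨α, W k⟩) − ⟨β, W k⟩) and g_β(m) = ∑ k, (W k) m · ( a k · Real.exp (−⟨β, W k⟩) − Real.exp ⟨α, W k⟩ ), with ψ(y) = deriv (fun z => Real.log (Real.Gamma z)) y. -/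

import Mathlib

open Finset

section Gamma

/-- The digamma function on the reals, as the derivative of `log ∘ Γ`. -/
local notation "ψ" => deriv (fun z : ℝ => Real.log (Real.Gamma z))

lemma log_gammaPDFReal {κ r x : ℝ} (hκ : 0 < κ) (hr : 0 < r) (hx : 0 < x) :
    Real.log (ProbabilityTheory.gammaPDFReal κ r x) =
      κ * Real.log r - Real.log (Real.Gamma κ) + (κ - 1) * Real.log x - r * x := by
  have hΓ : Real.Gamma κ ≠ 0 := (Real.Gamma_pos_of_pos hκ).ne'
  have hrκ : r ^ κ ≠ 0 := (Real.rpow_pos_of_pos hr κ).ne'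
  have hxκ : x ^ (κ - 1) ≠ 0 := (Real.rpow_pos_of_pos hx (κ - 1)).ne'
  rw [ProbabilityTheory.gammaPDFReal, if_pos hx.le,
    Real.log_mul (mul_ne_zero (div_ne_zero hrκ hΓ) hxκ) (Real.exp_ne_zero _),
    Real.log_mul (div_ne_zero hrκ hΓ) hxκ, Real.log_div hrκ hΓ,
    Real.log_rpow hr, Real.log_rpow hx, Real.log_exp, ← sub_eq_add_neg]

lemma hasDerivAt_log_Gamma {s : ℝ} (hs : 0 < s) :
    HasDerivAt (fun z => Real.log (Real.Gamma z)) (ψ s) s := by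
  have hΓ : DifferentiableAt ℝ Real.Gamma s :=
    Real.differentiableAt_Gamma fun m => ((neg_nonpos.mpr m.cast_nonneg).trans_lt hs).ne'
  exact (hΓ.log (Real.Gamma_pos_of_pos hs).ne').hasDerivAt

variable {E : Type*} [NormedAddCommGroup E] [NormedSpace ℝ E] {p : E} {x : ℝ}

lemma hasFDerivAt_log_gammaPDFReal {κ r : E → ℝ} {κ' r' : E →L[ℝ] ℝ}
    (hκ : HasFDerivAt κ κ' p) (hr : HasFDerivAt r r' p)
    (hκp : 0 < κ p) (hrp : 0 < r p) (hx : 0 < x) :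
    HasFDerivAt (fun q => Real.log (ProbabilityTheory.gammaPDFReal (κ q) (r q) x))
      ((Real.log (r p) - ψ (κ p) + Real.log x) • κ' + (κ p / r p - x) • r') p := by
  have log_eq : (fun q => Real.log (ProbabilityTheory.gammaPDFReal (κ q) (r q) x)) =ᶠ[nhds p]
      fun q => κ q * Real.log (r q) - Real.log (Real.Gamma (κ q)) +
        (κ q - 1) * Real.log x - r q * x := by
    filter_upwards [hκ.continuousAt.eventually (lt_mem_nhds hκp),
      hr.continuousAt.eventually (lt_mem_nhds hrp)] with q hκq hrq
    exact log_gammaPDFReal hκq hrq hx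
  have hlogΓ : HasFDerivAt (fun q => Real.log (Real.Gamma (κ q))) (ψ (κ p) • κ') p :=
    (hasDerivAt_log_Gamma hκp).comp_hasFDerivAt p hκ
  refine HasFDerivAt.congr_of_eventuallyEq ?_ log_eq
  refine ((((hκ.mul (hr.log hrp.ne')).sub hlogΓ).add
    ((hκ.sub_const 1).mul_const (Real.log x))).sub (hr.mul_const x)).congr_fderiv ?_
  rw [smul_smul, ← div_eq_mul_inv]
  module

lemma hasFDerivAt_log_gammaPDFReal_exp {u v : E → ℝ} {u' v' : E →L[ℝ] ℝ}
    (hu : HasFDerivAt u u' p) (hv : HasFDerivAt v v' p) (hx : 0 < x) :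
    HasFDerivAt
      (fun q => Real.log
        (ProbabilityTheory.gammaPDFReal (Real.exp (u q)) (Real.exp (-v q)) x))
      ((Real.exp (u p) * (Real.log x - ψ (Real.exp (u p)) - v p)) • u' +
        (x * Real.exp (-v p) - Real.exp (u p)) • v') p := by
  refine (hasFDerivAt_log_gammaPDFReal hu.exp hv.neg.exp
    (Real.exp_pos _) (Real.exp_pos _) hx).congr_fderiv ?_
  have hcancel : Real.exp (u p) / Real.exp (-v p) * Real.exp (-v p) = Real.exp (u p) :=
    div_mul_cancel₀ _ (Real.exp_ne_zero _)
  rw [Pi.neg_apply, Real.log_exp, smul_smul, smul_neg, smul_neg, smul_smul, sub_mul, hcancel]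
  module

end Gamma

lemma hasFDerivAt_sum_mul_const {𝕜 ι : Type*} [NontriviallyNormedField 𝕜] [Fintype ι]
    (w v : ι → 𝕜) :
    HasFDerivAt (fun q : ι → 𝕜 => ∑ m, q m * w m)
      (∑ m, w m • (ContinuousLinearMap.proj m : (ι → 𝕜) →L[𝕜] 𝕜)) v :=
  HasFDerivAt.fun_sum fun m _ => (hasFDerivAt_apply m v).mul_const (w m)

lemma sum_mul_sum_mul_eq_sum_sum_mul_mul {R ι κ : Type*} [CommSemiring R]
    [Fintype ι] [Fintype κ] (c : κ → R) (W : κ → ι → R) (h : ι → R) :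
    ∑ k, c k * ∑ m, W k m * h m = ∑ m, (∑ k, W k m * c k) * h m := by
  simpa only [dotProduct, Matrix.mulVec, Matrix.vecMul, Matrix.of_apply, mul_comm (c _)]
    using Matrix.dotProduct_mulVec c (Matrix.of W) h

/-- Proposition 1, joint amplitude block: the amplitude log-likelihood
`L(α, β) = ∑ k, log (gammaPDFReal (exp⟨α, W k⟩) (exp(−⟨β, W k⟩)) (a k))` is differentiable
at every `(α, β)`, and its Fréchet derivative maps a direction `(h, h')` to
`∑ m, gα m · h m + ∑ m, gβ m · h' m` with the α- and β-gradient blocks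
`gα m = ∑ k, (W k) m · exp⟨α, W k⟩ · (log (a k) − ψ(exp⟨α, W k⟩) − ⟨β, W k⟩)` and
`gβ m = ∑ k, (W k) m · (a k · exp(−⟨β, W k⟩) − exp⟨α, W k⟩)`. -/
theorem gamma_loglik_frechet_deriv_joint
    (M K : ℕ) (a : Fin K → ℝ) (ha : ∀ k, 0 < a k)
    (W : Fin K → Fin M → ℝ) :
    ∀ α β : Fin M → ℝ,
      DifferentiableAt ℝ (fun p : (Fin M → ℝ) × (Fin M → ℝ) =>
          ∑ k, Real.log (ProbabilityTheory.gammaPDFReal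
            (Real.exp (∑ m, p.1 m * W k m)) (Real.exp (-(∑ m, p.2 m * W k m))) (a k)))
        (α, β) ∧
      ∀ h h' : Fin M → ℝ,
        fderiv ℝ (fun p : (Fin M → ℝ) × (Fin M → ℝ) =>
            ∑ k, Real.log (ProbabilityTheory.gammaPDFReal
              (Real.exp (∑ m, p.1 m * W k m)) (Real.exp (-(∑ m, p.2 m * W k m))) (a k)))
          (α, β) (h, h') =
        (∑ m, (∑ k, W k m * Real.exp (∑ m, α m * W k m) *
            (Real.log (a k) -
              deriv (fun z : ℝ => Real.log (Real.Gamma z)) (Real.exp (∑ m, α m * W k m)) -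
              ∑ m, β m * W k m)) * h m) +
        ∑ m, (∑ k, W k m *
            (a k * Real.exp (-(∑ m, β m * W k m)) - Real.exp (∑ m, α m * W k m))) * h' m := by
  intro α β
  have hshape (k : Fin K) :=
    (hasFDerivAt_sum_mul_const (W k) α).comp (α, β) (hasFDerivAt_fst (𝕜 := ℝ))
  have hscale (k : Fin K) :=
    (hasFDerivAt_sum_mul_const (W k) β).comp (α, β) (hasFDerivAt_snd (𝕜 := ℝ))
  have hL := HasFDerivAt.fun_sum (u := univ) fun k _ =>
    hasFDerivAt_log_gammaPDFReal_exp (hshape k) (hscale k) (ha k)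
  refine ⟨hL.differentiableAt, fun h h' => ?_⟩
  refine (DFunLike.congr_fun hL.fderiv (h, h')).trans ?_
  simp [sum_add_distrib, mul_assoc, ← sum_mul_sum_mul_eq_sum_sum_mul_mul]
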